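/- For every integer m ≥ 1, the series ∑_{k=0}^∞ [E_{1−2m}(iπ(k+1/2)) − E_{1−2m}(−iπ(k+1/2))]/(k+1/2) converges and equals iπ/(2m). -/

import Mathlib

open Filter

/-- The generalized exponential integral of nonpositive integer order `-p`:
`E_{-p}(z) = Γ(p+1) e^{-z} z^{-p-1} ∑_{j=0}^{p} z^j/Γ(j+1)`. -/
noncomputable def expIntNeg (p : ℕ) (z : ℂ) : ℂ :=
  (Nat.factorial p : ℂ) * Complex.exp (-z) * z ^ (-(p : ℤ) - 1) *
    ∑ j ∈ Finset.range (p + 1), z ^ j / (Nat.factorial j : ℂ)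

/-!
On the imaginary axis `∫₁^∞ t ^ q e^{-zt} dt` diverges, but its complement satisfies
`∫₀¹ t ^ q e^{-zt} dt = q! / z ^ (q + 1) - E_{-q}(z)` for every `z ≠ 0`. For even `q` the algebraic
terms at `z` and `-z` cancel, and the recurrence `z E_{-(q+1)}(z) = e^{-z} + (q + 1) E_{-q}(z)` then
expresses `E_{-(q+1)}(z) - E_{-(q+1)}(-z)` through `∫₀¹ t ^ q cosh (zt) dt` when `cosh z = 0`.
At `z = iπ(k + 1/2)` the terms of the series become integrals of `t ^ q` against
`cos (π(k + 1/2)t) / (k + 1/2) ^ 2`, and these cosines sum uniformly to the triangle wave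
`π² (1 - t) / 2`. With `q = 2m - 2`, only the integral of `t ^ q (1 - t)` over `[0, 1]` remains.
-/

open MeasureTheory Set
open scoped Nat Real

section ExponentialIntegral

variable {z : ℂ}

lemma expIntNeg_eq_div_pow (p : ℕ) (z : ℂ) :
    expIntNeg p z = (p ! : ℂ) * Complex.exp (-z) / z ^ (p + 1) *
      ∑ j ∈ Finset.range (p + 1), z ^ j / (j ! : ℂ) := by
  rw [expIntNeg, show -(p : ℤ) - 1 = -((p + 1 : ℕ) : ℤ) by push_cast; ring, zpow_neg,
    zpow_natCast, div_eq_mul_inv]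

lemma expIntNeg_zero (z : ℂ) : expIntNeg 0 z = Complex.exp (-z) / z := by
  simp [expIntNeg_eq_div_pow]

lemma expIntNeg_succ (p : ℕ) (hz : z ≠ 0) :
    expIntNeg (p + 1) z = (Complex.exp (-z) + (p + 1) * expIntNeg p z) / z := by
  have hfact : (p ! : ℂ) ≠ 0 := mod_cast p.factorial_ne_zero
  rw [expIntNeg_eq_div_pow, expIntNeg_eq_div_pow, Finset.sum_range_succ _ (p + 1),
    Nat.factorial_succ]
  push_cast
  field_simp
  ring

lemma integral_cexp_neg_mul (hz : z ≠ 0) :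
    ∫ t : ℝ in 0..1, Complex.exp (-(z * t)) = (1 - Complex.exp (-z)) / z := by
  simp only [← neg_mul]
  rw [integral_exp_mul_complex (neg_ne_zero.mpr hz), Complex.ofReal_one, Complex.ofReal_zero,
    mul_one, mul_zero, Complex.exp_zero, div_neg, ← neg_div, neg_sub]

lemma integral_pow_succ_mul_cexp_neg_mul (p : ℕ) (hz : z ≠ 0) :
    ∫ t : ℝ in 0..1, (t : ℂ) ^ (p + 1) * Complex.exp (-(z * t)) =
      ((p + 1) * (∫ t : ℝ in 0..1, (t : ℂ) ^ p * Complex.exp (-(z * t))) -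
        Complex.exp (-z)) / z := by
  have hderiv_pow (t : ℝ) :
      HasDerivAt (fun s : ℝ ↦ (s : ℂ) ^ (p + 1)) ((p + 1) * (t : ℂ) ^ p) t := by
    simpa using (hasDerivAt_pow (p + 1) (t : ℂ)).comp_ofReal
  have hderiv_exp (t : ℝ) :
      HasDerivAt (fun s : ℝ ↦ -Complex.exp (-(z * s)) / z) (Complex.exp (-(z * t))) t := by
    simpa [hz] using ((((hasDerivAt_id (t : ℂ)).const_mul z).neg.cexp).neg.div_const z).comp_ofReal
  have hparts := intervalIntegral.integral_mul_deriv_eq_deriv_mul (a := 0) (b := 1)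
    (fun t _ ↦ hderiv_pow t) (fun t _ ↦ hderiv_exp t)
    (Continuous.intervalIntegrable (by fun_prop) _ _)
    (Continuous.intervalIntegrable (by fun_prop) _ _)
  have hconst : ∫ t : ℝ in 0..1, (p + 1) * (t : ℂ) ^ p * (-Complex.exp (-(z * t)) / z) =
      -((p + 1) / z) * ∫ t : ℝ in 0..1, (t : ℂ) ^ p * Complex.exp (-(z * t)) := by
    rw [← intervalIntegral.integral_const_mul]
    congr 1 with t
    ring
  rw [hparts, hconst, Complex.ofReal_one, Complex.ofReal_zero, one_pow, zero_pow p.succ_ne_zero,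
    mul_one]
  ring

lemma integral_pow_mul_cexp_neg_mul (p : ℕ) (hz : z ≠ 0) :
    ∫ t : ℝ in 0..1, (t : ℂ) ^ p * Complex.exp (-(z * t)) =
      (p ! : ℂ) / z ^ (p + 1) - expIntNeg p z := by
  induction p with
  | zero =>
    simp only [pow_zero, one_mul, integral_cexp_neg_mul hz, expIntNeg_zero, Nat.factorial_zero,
      Nat.cast_one, zero_add, pow_one, sub_div]
  | succ p ih =>
    rw [integral_pow_succ_mul_cexp_neg_mul p hz, ih, expIntNeg_succ p hz, Nat.factorial_succ]
    push_cast
    field_simp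
    ring

lemma expIntNeg_add_expIntNeg_neg {q : ℕ} (hq : Even q) (hz : z ≠ 0) :
    expIntNeg q z + expIntNeg q (-z) =
      -2 * ∫ t : ℝ in 0..1, (t : ℂ) ^ q * Complex.cosh (z * t) := by
  have hpos := integral_pow_mul_cexp_neg_mul q hz
  have hneg := integral_pow_mul_cexp_neg_mul q (neg_ne_zero.mpr hz)
  rw [hq.add_one.neg_pow, div_neg] at hneg
  have hcosh : 2 * ∫ t : ℝ in 0..1, (t : ℂ) ^ q * Complex.cosh (z * t) =
      (∫ t : ℝ in 0..1, (t : ℂ) ^ q * Complex.exp (-(z * t))) +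
        ∫ t : ℝ in 0..1, (t : ℂ) ^ q * Complex.exp (-(-z * t)) := by
    rw [← intervalIntegral.integral_const_mul, ← intervalIntegral.integral_add
      (Continuous.intervalIntegrable (by fun_prop) _ _)
      (Continuous.intervalIntegrable (by fun_prop) _ _)]
    congr 1 with t
    rw [Complex.cosh, neg_mul, neg_neg]
    ring
  linear_combination hcosh + hpos + hneg

lemma expIntNeg_succ_sub_expIntNeg_succ_neg {q : ℕ} (hq : Even q) (hz : z ≠ 0)
    (hcosh : Complex.cosh z = 0) :
    expIntNeg (q + 1) z - expIntNeg (q + 1) (-z) =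
      -2 * (q + 1) / z * ∫ t : ℝ in 0..1, (t : ℂ) ^ q * Complex.cosh (z * t) := by
  have hexp : Complex.exp z + Complex.exp (-z) = 0 := by rw [← Complex.two_cosh, hcosh, mul_zero]
  rw [expIntNeg_succ q hz, expIntNeg_succ q (neg_ne_zero.mpr hz), neg_neg]
  linear_combination hexp / z + (q + 1) / z * expIntNeg_add_expIntNeg_neg hq hz

end ExponentialIntegral

section HalfIntegerFrequencies

lemma natCast_add_half_ne_zero (k : ℕ) : (k : ℂ) + 1 / 2 ≠ 0 := by
  simpa using Complex.ofReal_ne_zero.mpr (by positivity : (k : ℝ) + 1 / 2 ≠ 0)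

lemma cosh_I_mul_pi_mul_natCast_add_half (k : ℕ) :
    Complex.cosh (Complex.I * π * (k + 1 / 2)) = 0 := by
  rw [show Complex.I * π * (k + 1 / 2) = π * (k + 1 / 2) * Complex.I by ring, Complex.cosh_mul_I,
    Complex.cos_eq_zero_iff]
  exact ⟨k, by push_cast; ring⟩

lemma hasSum_odd_of_hasSum_even {G : Type*} [AddCommGroup G] [TopologicalSpace G]
    [IsTopologicalAddGroup G] {f : ℕ → G} {a b : G} (hf : HasSum f a)
    (heven : HasSum (fun k ↦ f (2 * k)) b) : HasSum (fun k ↦ f (2 * k + 1)) (a - b) := by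
  have hinj : Function.Injective (2 * · : ℕ → ℕ) := mul_right_injective₀ two_ne_zero
  have hcompl : (range (2 * · : ℕ → ℕ))ᶜ = range (2 * · + 1) := by
    rw [range_two_mul, range_two_mul_add_one]
    exact Nat.isCompl_even_odd.compl_eq
  have hodd := (hinj.hasSum_range_iff.mpr heven).hasSum_iff_compl.mp hf
  rw [hcompl] at hodd
  exact ((add_left_injective 1).comp hinj).hasSum_range_iff.mp hodd

lemma hasSum_cos_div_sq_half_odd {t : ℝ} (ht : t ∈ Icc (0 : ℝ) 2) :
    HasSum (fun k : ℕ ↦ Real.cos (π * (k + 1 / 2) * t) / (k + 1 / 2) ^ 2)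
      (π ^ 2 / 2 * (1 - t)) := by
  have hcos {x : ℝ} (hx : x ∈ Icc (0 : ℝ) 1) :
      HasSum (fun n : ℕ ↦ Real.cos (2 * π * n * x) / n ^ 2) (π ^ 2 * (x ^ 2 - x + 6⁻¹)) := by
    have h := hasSum_one_div_nat_pow_mul_cos one_ne_zero hx
    rw [mul_one, ← bernoulliFun, bernoulliFun_two] at h
    convert! h using 1
    · ext n
      ring
    · rw [Nat.factorial_two]
      push_cast
      ring
  have hall := hcos (x := t / 4) ⟨by linarith [ht.1], by linarith [ht.2]⟩
  have heven := (hcos (x := t / 2) ⟨by linarith [ht.1], by linarith [ht.2]⟩).div_const 4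
  have hodd := hasSum_odd_of_hasSum_even hall (b := π ^ 2 * ((t / 2) ^ 2 - t / 2 + 6⁻¹) / 4) <| by
    convert! heven using 2 with k
    push_cast
    rw [mul_pow, div_div]
    ring_nf
  convert! hodd.mul_left 4 using 1
  · ext k
    push_cast
    rw [show 2 * π * (2 * k + 1) * (t / 4) = π * (k + 1 / 2) * t by ring,
      show (2 * k + 1 : ℝ) = 2 * (k + 1 / 2) by ring]
    field_simp
    ring
  · ring

lemma summable_one_div_natCast_add_half_sq : Summable fun k : ℕ ↦ 1 / ((k : ℝ) + 1 / 2) ^ 2 := by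
  simpa using (hasSum_cos_div_sq_half_odd (t := 0) (by simp)).summable

lemma hasSum_integral_cos_div_sq_smul {E : Type*} [NormedAddCommGroup E] [NormedSpace ℝ E]
    {f : ℝ → E} {a b : ℝ} (ha : a ∈ Icc (0 : ℝ) 2) (hb : b ∈ Icc (0 : ℝ) 2)
    (hf : IntervalIntegrable f volume a b) :
    HasSum (fun k : ℕ ↦ ∫ t in a..b, (Real.cos (π * (k + 1 / 2) * t) / (k + 1 / 2) ^ 2) • f t)
      (∫ t in a..b, (π ^ 2 / 2 * (1 - t)) • f t) := by
  have hsummable := summable_one_div_natCast_add_half_sq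
  refine intervalIntegral.hasSum_integral_of_dominated_convergence
    (fun k t ↦ 1 / ((k : ℝ) + 1 / 2) ^ 2 * ‖f t‖) (fun k ↦ ?_) (fun k ↦ .of_forall fun t _ ↦ ?_)
    (.of_forall fun t _ ↦ hsummable.mul_right _) ?_ (.of_forall fun t ht ↦ ?_)
  · exact (Continuous.aestronglyMeasurable (by fun_prop)).smul hf.def'.aestronglyMeasurable
  · rw [norm_smul, norm_div, norm_pow, Real.norm_eq_abs, Real.norm_eq_abs,
      abs_of_nonneg (by positivity : (0 : ℝ) ≤ k + 1 / 2)]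
    gcongr
    exact Real.abs_cos_le_one _
  · simpa only [tsum_mul_right] using hf.norm.const_mul _
  · exact (hasSum_cos_div_sq_half_odd
      (uIcc_subset_Icc ha hb (uIoc_subset_uIcc ht))).smul_const (f t)

end HalfIntegerFrequencies

lemma expIntNeg_sub_neg_div_natCast_add_half {q : ℕ} (hq : Even q) (k : ℕ) :
    (expIntNeg (q + 1) (Complex.I * π * (k + 1 / 2)) -
        expIntNeg (q + 1) (-(Complex.I * π * (k + 1 / 2)))) / (k + 1 / 2) =
      2 * Complex.I * (q + 1) / π *
        ∫ t : ℝ in 0..1, (Real.cos (π * (k + 1 / 2) * t) / (k + 1 / 2) ^ 2) • (t : ℂ) ^ q := by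
  have hhalf := natCast_add_half_ne_zero k
  have hπ : (π : ℂ) ≠ 0 := mod_cast Real.pi_ne_zero
  have hz : Complex.I * π * (k + 1 / 2) ≠ 0 := mul_ne_zero (mul_ne_zero Complex.I_ne_zero hπ) hhalf
  have hintegral :
      ∫ t : ℝ in 0..1, (Real.cos (π * (k + 1 / 2) * t) / (k + 1 / 2) ^ 2) • (t : ℂ) ^ q =
        (∫ t : ℝ in 0..1, (t : ℂ) ^ q * Complex.cosh (Complex.I * π * (k + 1 / 2) * t)) /
          (k + 1 / 2) ^ 2 := by
    rw [← intervalIntegral.integral_div]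
    congr 1 with t
    rw [show Complex.I * π * (k + 1 / 2) * t = π * (k + 1 / 2) * t * Complex.I by ring,
      Complex.cosh_mul_I, Complex.real_smul]
    push_cast
    ring
  rw [expIntNeg_succ_sub_expIntNeg_succ_neg hq hz (cosh_I_mul_pi_mul_natCast_add_half k), hintegral]
  field_simp
  rw [Complex.I_sq]
  ring

lemma integral_one_sub_smul_pow (q : ℕ) :
    ∫ t : ℝ in 0..1, (1 - t) • (t : ℂ) ^ q = 1 / ((q + 1) * (q + 2)) := by
  have hexpand (t : ℝ) : (1 - t) • (t : ℂ) ^ q = ((t ^ q - t ^ (q + 1) : ℝ) : ℂ) := by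
    rw [Complex.real_smul]
    push_cast
    ring
  have hq₁ : (q + 1 : ℂ) ≠ 0 := mod_cast q.succ_ne_zero
  have hq₂ : (q + 1 + 1 : ℂ) ≠ 0 := mod_cast (q + 1).succ_ne_zero
  simp only [hexpand]
  rw [intervalIntegral.integral_ofReal, intervalIntegral.integral_sub (by simp) (by simp),
    integral_pow, integral_pow, one_pow, one_pow, zero_pow q.succ_ne_zero,
    zero_pow (q + 1).succ_ne_zero, show (q + 2 : ℂ) = q + 1 + 1 by ring]
  push_cast
  field_simp
  ring

/-- For every `m ≥ 1`, the series
`∑_{k=0}^∞ [E_{1-2m}(iπ(k+1/2)) - E_{1-2m}(-iπ(k+1/2))]/(k+1/2)` converges to `iπ/(2m)`. -/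
theorem stmt_7 (m : ℕ) (hm : 1 ≤ m) :
    Tendsto (fun n => ∑ k ∈ Finset.range n,
        (expIntNeg (2*m - 1) (Complex.I * (Real.pi : ℂ) * ((k : ℂ) + 1/2)) -
          expIntNeg (2*m - 1) (-(Complex.I * (Real.pi : ℂ) * ((k : ℂ) + 1/2))))
          / ((k : ℂ) + 1/2))
      atTop (nhds (Complex.I * (Real.pi : ℂ) / (2 * (m : ℂ)))) := by
  obtain ⟨n, rfl⟩ := Nat.exists_eq_add_of_le' hm
  have horder : 2 * (n + 1) - 1 = 2 * n + 1 := by omega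
  simp only [horder, expIntNeg_sub_neg_div_natCast_add_half (even_two_mul n)]
  apply HasSum.tendsto_sum_nat
  have hseries := hasSum_integral_cos_div_sq_smul (a := 0) (b := 1) (by simp) (by simp)
    (f := fun t ↦ (t : ℂ) ^ (2 * n)) (Continuous.intervalIntegrable (by fun_prop) _ _)
  convert! hseries.mul_left _ using 1
  have hπ : (π : ℂ) ≠ 0 := mod_cast Real.pi_ne_zero
  have hn₁ : (n + 1 : ℂ) ≠ 0 := mod_cast n.succ_ne_zero
  have hn₂ : (2 * n + 1 : ℂ) ≠ 0 := mod_cast (2 * n).succ_ne_zero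
  simp only [mul_smul, intervalIntegral.integral_smul, integral_one_sub_smul_pow]
  rw [Complex.real_smul]
  push_cast
  rw [show (2 * n + 2 : ℂ) = 2 * (n + 1) by ring]
  field_simp
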